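/- For nonempty subsets S, T ⊆ Ω: if S ∩ T ≠ ∅ then C(D_S ∪ D_T) = D_{S∩T}, and if S ∩ T = ∅ then C(D_S ∪ D_T) = L(Ω). That is, combination of the coherent sets D_S and D_T corresponds to intersection of the underlying sets. -/

import Mathlib

open Set

universe u

/-- The set of gambles on `Ω`: bounded real-valued functions. -/
def Gmb (Ω : Type u) : Set (Ω → ℝ) := {f | ∃ B : ℝ, ∀ ω, |f ω| ≤ B}

/-- `L⁺(Ω)`: non-negative, non-vanishing gambles. -/
def GmbPos (Ω : Type u) : Set (Ω → ℝ) :=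
  {f | f ∈ Gmb Ω ∧ (∀ ω, 0 ≤ f ω) ∧ f ≠ 0}

/-- Coherent set of gambles. -/
def Coherent {Ω : Type u} (D : Set (Ω → ℝ)) : Prop :=
  D ⊆ Gmb Ω ∧ GmbPos Ω ⊆ D ∧ (0 : Ω → ℝ) ∉ D ∧
    (∀ f ∈ D, ∀ g ∈ D, f + g ∈ D) ∧
    (∀ f ∈ D, ∀ c : ℝ, 0 < c → c • f ∈ D)

/-- Maximal coherent set of gambles: no coherent set properly contains it. -/
def MaxCoh {Ω : Type u} (M : Set (Ω → ℝ)) : Prop :=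
  Coherent M ∧ ∀ D : Set (Ω → ℝ), Coherent D → M ⊆ D → D = M

/-- Membership in `Φ(Ω)`: coherent sets together with `L(Ω)`. -/
def PhiMem {Ω : Type u} (D : Set (Ω → ℝ)) : Prop :=
  Coherent D ∨ D = Gmb Ω

/-- The closure operator `C` on sets of gambles. -/
def Cl {Ω : Type u} (A : Set (Ω → ℝ)) : Set (Ω → ℝ) :=
  ⋂₀ {D | PhiMem D ∧ A ⊆ D}

/-- Order on partitions (as equivalence relations): `ple x y` iff `𝒫x ≤ 𝒫y`,
i.e. `y` refines `x`. -/
def ple {Ω : Type u} (x y : Setoid Ω) : Prop := ∀ a b : Ω, y.r a b → x.r a b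

/-- Join of two partitions: the relation is the conjunction. -/
def pjoin {Ω : Type u} (x y : Setoid Ω) : Setoid Ω :=
  ⟨fun a b => x.r a b ∧ y.r a b,
    ⟨fun a => ⟨x.iseqv.refl a, y.iseqv.refl a⟩,
     fun h => ⟨x.iseqv.symm h.1, y.iseqv.symm h.2⟩,
     fun h h' => ⟨x.iseqv.trans h.1 h'.1, y.iseqv.trans h.2 h'.2⟩⟩⟩

/-- Conditional independence of partitions: blocks are equivalence classes,
`B1 ∩ B ≠ ∅` and `B2 ∩ B ≠ ∅` imply `B1 ∩ B2 ∩ B ≠ ∅`. -/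
def CondIndep {Ω : Type u} (p1 p2 p : Setoid Ω) : Prop :=
  ∀ a b c : Ω, (∃ u, p1.r a u ∧ p.r c u) → (∃ v, p2.r b v ∧ p.r c v) →
    ∃ w, p1.r a w ∧ p2.r b w ∧ p.r c w

/-- Saturation operator of a partition. -/
def sat {Ω : Type u} (x : Setoid Ω) (S : Set Ω) : Set Ω :=
  {ω | ∃ ω' ∈ S, x.r ω ω'}

/-- `L_x`: the `x`-measurable gambles. -/
def Meas {Ω : Type u} (x : Setoid Ω) : Set (Ω → ℝ) :=
  {f | f ∈ Gmb Ω ∧ ∀ a b : Ω, x.r a b → f a = f b}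

/-- Extraction operator `ε_x`. -/
def eps {Ω : Type u} (x : Setoid Ω) (D : Set (Ω → ℝ)) : Set (Ω → ℝ) :=
  Cl (D ∩ Meas x)

/-- `At(D)`: maximal coherent sets dominating `D`. -/
def Atoms {Ω : Type u} (D : Set (Ω → ℝ)) : Set (Set (Ω → ℝ)) :=
  {M | MaxCoh M ∧ D ⊆ M}

/-- `D_S`: the coherent set of gambles associated to a set `S ⊆ Ω`. -/
def DS {Ω : Type u} (S : Set Ω) : Set (Ω → ℝ) :=
  {f | f ∈ Gmb Ω ∧ 0 < sInf (f '' S)} ∪ GmbPos Ω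

/-- `posi(K)`: positive linear hull. -/
def posi {Ω : Type u} (K : Set (Ω → ℝ)) : Set (Ω → ℝ) :=
  {g | ∃ r : ℕ, 1 ≤ r ∧ ∃ (lam : Fin r → ℝ) (f : Fin r → (Ω → ℝ)),
    (∀ j, 0 < lam j) ∧ (∀ j, f j ∈ K) ∧ g = ∑ j, lam j • f j}

/-!
A gamble `f` with `ε ≤ f` on `S ∩ T`, where `0 < ε`, is a sum of two gambles, one at least `ε / 2`
on `S` and the other at least `ε / 2` on `T`: the first equals `ε / 2` on `S` and `f - ε / 2` off
`S`, and the second is the remainder. Hence every such `f` lies in `C(D_S ∪ D_T)`. If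
`S ∩ T = ∅`, the condition on `f` is void, so the closure is all of `L(Ω)`; otherwise `D_{S ∩ T}`
is itself a coherent set containing `D_S` and `D_T`, so the closure is no larger.
-/

section UniformlyPosOn

variable {α : Type*} {f g : α → ℝ} {s t : Set α}

/-- Uniform positivity on a set: a positive constant bounds the function below there. On a nonempty
set this is `inf_s f > 0`; on the empty set it holds for every function, as the convention
`inf ∅ = +∞` would give, whereas `sInf (f '' ∅) = 0` in Lean. -/
def UniformlyPosOn (f : α → ℝ) (s : Set α) : Prop :=
  ∃ ε > 0, ∀ a ∈ s, ε ≤ f a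

lemma uniformlyPosOn_empty (f : α → ℝ) : UniformlyPosOn f ∅ :=
  ⟨1, one_pos, fun _ h => h.elim⟩

lemma sInf_image_pos_iff_uniformlyPosOn (hs : s.Nonempty) (hf : BddBelow (f '' s)) :
    0 < sInf (f '' s) ↔ UniformlyPosOn f s :=
  ⟨fun h => ⟨_, h, fun _ ha => csInf_le hf (mem_image_of_mem f ha)⟩,
    fun ⟨_, hε, h⟩ => hε.trans_le (le_csInf (hs.image f) (forall_mem_image.2 h))⟩

namespace UniformlyPosOn

lemma mono (h : UniformlyPosOn f t) (hst : s ⊆ t) : UniformlyPosOn f s :=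
  h.imp fun _ ⟨hε, hf⟩ => ⟨hε, fun a ha => hf a (hst ha)⟩

lemma ne_zero (h : UniformlyPosOn f s) (hs : s.Nonempty) : f ≠ 0 := by
  rintro rfl
  obtain ⟨ε, hε, hf⟩ := h
  obtain ⟨a, ha⟩ := hs
  exact hε.not_ge (hf a ha)

lemma add_of_nonneg (hf : UniformlyPosOn f s) (hg : ∀ a ∈ s, 0 ≤ g a) :
    UniformlyPosOn (f + g) s :=
  hf.imp fun _ ⟨hε, h⟩ => ⟨hε, fun a ha => le_add_of_le_of_nonneg (h a ha) (hg a ha)⟩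

lemma add (hf : UniformlyPosOn f s) (hg : UniformlyPosOn g s) : UniformlyPosOn (f + g) s := by
  obtain ⟨ε, hε, h⟩ := hg
  exact hf.add_of_nonneg fun a ha => hε.le.trans (h a ha)

lemma smul (hf : UniformlyPosOn f s) {c : ℝ} (hc : 0 < c) : UniformlyPosOn (c • f) s := by
  obtain ⟨ε, hε, h⟩ := hf
  exact ⟨c * ε, mul_pos hc hε, fun a ha => mul_le_mul_of_nonneg_left (h a ha) hc.le⟩

end UniformlyPosOn

end UniformlyPosOn

section Gambles

variable {Ω : Type u} {f g : Ω → ℝ} {S T : Set Ω}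

/-- The gambles `L(Ω)` as a linear subspace of `Ω → ℝ`, so that the closure properties of `Gmb Ω`
are those of a submodule. -/
def gmbSubmodule (Ω : Type u) : Submodule ℝ (Ω → ℝ) where
  carrier := Gmb Ω
  add_mem' := fun ⟨A, hA⟩ ⟨B, hB⟩ =>
    ⟨A + B, fun ω => (abs_add_le _ _).trans (add_le_add (hA ω) (hB ω))⟩
  zero_mem' := ⟨0, fun _ => abs_zero.le⟩
  smul_mem' := fun c _ ⟨A, hA⟩ =>
    ⟨|c| * A, fun ω => (abs_mul c _).trans_le (mul_le_mul_of_nonneg_left (hA ω) (abs_nonneg c))⟩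

lemma const_mem_gmb (c : ℝ) : (fun _ => c) ∈ Gmb Ω :=
  ⟨|c|, fun _ => le_rfl⟩

lemma piecewise_mem_gmb [DecidablePred (· ∈ S)] (hf : f ∈ Gmb Ω) (hg : g ∈ Gmb Ω) :
    S.piecewise f g ∈ Gmb Ω := by
  obtain ⟨A, hA⟩ := hf
  obtain ⟨B, hB⟩ := hg
  refine ⟨max A B, fun ω => ?_⟩
  by_cases hω : ω ∈ S
  · simpa only [piecewise_eq_of_mem _ _ _ hω] using le_max_of_le_left (hA ω)
  · simpa only [piecewise_eq_of_notMem _ _ _ hω] using le_max_of_le_right (hB ω)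

lemma bddBelow_image_of_mem_gmb (hf : f ∈ Gmb Ω) (S : Set Ω) : BddBelow (f '' S) := by
  obtain ⟨B, hB⟩ := hf
  exact ⟨-B, forall_mem_image.2 fun ω _ => (abs_le.1 (hB ω)).1⟩

lemma mem_gmbPos_iff : f ∈ GmbPos Ω ↔ f ∈ Gmb Ω ∧ 0 < f :=
  and_congr_right' (lt_iff_le_and_ne' (a := f) (b := 0)).symm

lemma UniformlyPosOn.exists_gmb_add_eq (hf : f ∈ Gmb Ω) (h : UniformlyPosOn f (S ∩ T)) :
    ∃ g ∈ Gmb Ω, ∃ k ∈ Gmb Ω, UniformlyPosOn g S ∧ UniformlyPosOn k T ∧ g + k = f := by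
  classical
  obtain ⟨ε, hε, hfε⟩ := h
  let c : Ω → ℝ := fun _ => ε / 2
  let g : Ω → ℝ := S.piecewise c (f - c)
  have hc : c ∈ Gmb Ω := const_mem_gmb _
  have hg : g ∈ Gmb Ω := piecewise_mem_gmb hc ((gmbSubmodule Ω).sub_mem hf hc)
  have hgS : ∀ ω ∈ S, g ω = ε / 2 := fun ω hω => piecewise_eq_of_mem _ _ _ hω
  have hgSc : ∀ ω ∉ S, g ω = f ω - ε / 2 := fun ω hω => piecewise_eq_of_notMem _ _ _ hω
  have hkT : ∀ ω ∈ T, ε / 2 ≤ f ω - g ω := by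
    intro ω hωT
    by_cases hωS : ω ∈ S
    · linarith [hfε ω ⟨hωS, hωT⟩, hgS ω hωS]
    · linarith [hgSc ω hωS]
  exact ⟨g, hg, f - g, (gmbSubmodule Ω).sub_mem hf hg,
    ⟨ε / 2, half_pos hε, fun ω hω => (hgS ω hω).ge⟩, ⟨ε / 2, half_pos hε, hkT⟩,
    add_sub_cancel g f⟩

end Gambles

section Closure

variable {Ω : Type u} {A D : Set (Ω → ℝ)} {f g : Ω → ℝ}

lemma PhiMem.gmbPos_subset (hD : PhiMem D) : GmbPos Ω ⊆ D := by
  rcases hD with ⟨-, hpos, -⟩ | rfl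
  · exact hpos
  · exact fun _ hf => hf.1

lemma PhiMem.add_mem (hD : PhiMem D) (hf : f ∈ D) (hg : g ∈ D) : f + g ∈ D := by
  rcases hD with ⟨-, -, -, hadd, -⟩ | rfl
  · exact hadd f hf g hg
  · exact (gmbSubmodule Ω).add_mem hf hg

lemma subset_cl : A ⊆ Cl A :=
  subset_sInter fun _ hD => hD.2

lemma cl_subset (hD : PhiMem D) (hA : A ⊆ D) : Cl A ⊆ D :=
  sInter_subset_of_mem ⟨hD, hA⟩

lemma gmbPos_subset_cl : GmbPos Ω ⊆ Cl A :=
  subset_sInter fun _ hD => hD.1.gmbPos_subset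

lemma add_mem_cl (hf : f ∈ Cl A) (hg : g ∈ Cl A) : f + g ∈ Cl A :=
  fun D hD => hD.1.add_mem (hf D hD) (hg D hD)

end Closure

section DS

variable {Ω : Type u} {f : Ω → ℝ} {S T : Set Ω}

lemma ds_subset_gmb (S : Set Ω) : DS S ⊆ Gmb Ω :=
  union_subset (fun _ hf => hf.1) fun _ hf => hf.1

lemma mem_ds_iff (hS : S.Nonempty) : f ∈ DS S ↔ f ∈ Gmb Ω ∧ (UniformlyPosOn f S ∨ 0 < f) := by
  have hinf : f ∈ Gmb Ω ∧ 0 < sInf (f '' S) ↔ f ∈ Gmb Ω ∧ UniformlyPosOn f S :=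
    and_congr_right fun hf =>
      sInf_image_pos_iff_uniformlyPosOn hS (bddBelow_image_of_mem_gmb hf S)
  rw [and_or_left, ← hinf, ← mem_gmbPos_iff]
  rfl

lemma ds_subset_ds (hS : S.Nonempty) (hST : S ⊆ T) : DS T ⊆ DS S := by
  intro f hf
  rw [mem_ds_iff (hS.mono hST)] at hf
  exact (mem_ds_iff hS).2 (hf.imp_right (Or.imp_left fun h => h.mono hST))

lemma coherent_ds (hS : S.Nonempty) : Coherent (DS S) := by
  refine ⟨ds_subset_gmb S, subset_union_right, ?zero, ?add, ?smul⟩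
  case zero =>
    rw [mem_ds_iff hS]
    rintro ⟨-, h | h⟩
    · exact h.ne_zero hS rfl
    · exact h.false
  case add =>
    intro f hf g hg
    rw [mem_ds_iff hS] at hf hg ⊢
    refine ⟨(gmbSubmodule Ω).add_mem hf.1 hg.1, ?_⟩
    rcases hf.2, hg.2 with ⟨hf | hf, hg | hg⟩
    · exact Or.inl (hf.add hg)
    · exact Or.inl (hf.add_of_nonneg fun ω _ => hg.le ω)
    · exact Or.inl (add_comm g f ▸ hg.add_of_nonneg fun ω _ => hf.le ω)
    · exact Or.inr (add_pos hf hg)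
  case smul =>
    intro f hf c hc
    rw [mem_ds_iff hS] at hf ⊢
    exact ⟨(gmbSubmodule Ω).smul_mem c hf.1, hf.2.imp (fun h => h.smul hc) (smul_pos hc)⟩

lemma UniformlyPosOn.mem_cl_ds_union_ds (hS : S.Nonempty) (hT : T.Nonempty) (hf : f ∈ Gmb Ω)
    (h : UniformlyPosOn f (S ∩ T)) : f ∈ Cl (DS S ∪ DS T) := by
  obtain ⟨g, hg, k, hk, hgS, hkT, rfl⟩ := h.exists_gmb_add_eq hf
  have hgDS : g ∈ DS S := (mem_ds_iff hS).2 ⟨hg, Or.inl hgS⟩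
  have hkDS : k ∈ DS T := (mem_ds_iff hT).2 ⟨hk, Or.inl hkT⟩
  exact add_mem_cl (subset_cl (Or.inl hgDS)) (subset_cl (Or.inr hkDS))

theorem cl_ds_union_ds_of_inter_nonempty (hST : (S ∩ T).Nonempty) :
    Cl (DS S ∪ DS T) = DS (S ∩ T) := by
  apply Subset.antisymm
  · exact cl_subset (Or.inl (coherent_ds hST))
      (union_subset (ds_subset_ds hST inter_subset_left) (ds_subset_ds hST inter_subset_right))
  · intro f hf
    obtain ⟨hfG, hpos | hpos⟩ := (mem_ds_iff hST).1 hf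
    · exact hpos.mem_cl_ds_union_ds hST.left hST.right hfG
    · exact gmbPos_subset_cl (mem_gmbPos_iff.2 ⟨hfG, hpos⟩)

theorem cl_ds_union_ds_of_inter_eq_empty (hS : S.Nonempty) (hT : T.Nonempty) (hST : S ∩ T = ∅) :
    Cl (DS S ∪ DS T) = Gmb Ω := by
  apply Subset.antisymm
  · exact cl_subset (Or.inr rfl) (union_subset (ds_subset_gmb S) (ds_subset_gmb T))
  · intro f hf
    have hpos : UniformlyPosOn f (S ∩ T) := hST ▸ uniformlyPosOn_empty f
    exact hpos.mem_cl_ds_union_ds hS hT hf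

end DS

theorem stmt12 {Ω : Type u} [Nonempty Ω] (S T : Set Ω) (hS : S.Nonempty) (hT : T.Nonempty) :
    ((S ∩ T).Nonempty → Cl (DS S ∪ DS T) = DS (S ∩ T)) ∧
    (S ∩ T = ∅ → Cl (DS S ∪ DS T) = Gmb Ω) :=
  ⟨cl_ds_union_ds_of_inter_nonempty, cl_ds_union_ds_of_inter_eq_empty hS hT⟩
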